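/- arXiv:0711.1373 — 2 statements merged into one kernel-verified Lean document; each statement's English description precedes it below -/
import Mathlib

section
/- For every complex number u with |u| < 1, the infinite product ∏_{k=1}^∞ (1 − u^k)^{−1} converges, the series ∑_{n=1}^∞ p(n) u^n converges absolutely, and ∏_{k=1}^∞ (1 − u^k)^{−1} = 1 + ∑_{n=1}^∞ p(n) u^n. -/
open Complex Filter

/-- `partitionCount n` is the number of partitions of `n`. -/
noncomputable def partitionCount (n : ℕ) : ℕ := Nat.card (Nat.Partition n)

section Helpers
open PowerSeries PowerSeries.WithPiTopology

variable {𝕜 : Type*} [RCLike 𝕜]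

/-- The power series `P` converges absolutely at `u` with value `x`. -/
def PEv (u : 𝕜) (P : PowerSeries 𝕜) (x : 𝕜) : Prop :=
  (Summable fun n => ‖coeff n P * u ^ n‖) ∧ ∑' n, coeff n P * u ^ n = x

lemma PEv.one (u : 𝕜) : PEv u 1 1 := by
  have h : ∀ n, n ∉ ({0} : Finset ℕ) → coeff n (1 : PowerSeries 𝕜) * u ^ n = 0 := by
    intro n hn
    have : n ≠ 0 := by simpa using hn
    simp [coeff_one, this]
  refine ⟨summable_of_ne_finset_zero (s := {0}) fun n hn => by rw [h n hn, norm_zero], ?_⟩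
  rw [tsum_eq_sum h]
  simp

lemma PEv.mul {u : 𝕜} {P Q : PowerSeries 𝕜} {x y : 𝕜} (hP : PEv u P x) (hQ : PEv u Q y) :
    PEv u (P * Q) (x * y) := by
  have key : ∀ n, coeff n (P * Q) * u ^ n =
      ∑ kl ∈ Finset.HasAntidiagonal.antidiagonal n, (coeff kl.1 P * u ^ kl.1) * (coeff kl.2 Q * u ^ kl.2) := by
    intro n
    rw [coeff_mul, Finset.sum_mul]
    refine Finset.sum_congr rfl fun kl hkl => ?_
    rw [← Finset.HasAntidiagonal.mem_antidiagonal.mp hkl, pow_add]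
    ring
  obtain ⟨hP1, hP2⟩ := hP
  obtain ⟨hQ1, hQ2⟩ := hQ
  have h1 := summable_norm_sum_mul_antidiagonal_of_summable_norm
    (f := fun n => coeff n P * u ^ n) (g := fun n => coeff n Q * u ^ n) hP1 hQ1
  have h2 := tsum_mul_tsum_eq_tsum_sum_antidiagonal_of_summable_norm
    (f := fun n => coeff n P * u ^ n) (g := fun n => coeff n Q * u ^ n) hP1 hQ1
  rw [hP2, hQ2] at h2
  refine ⟨h1.congr fun n => by rw [key], ?_⟩
  rw [h2]
  exact tsum_congr key

lemma PEv.prod {u : 𝕜} {P : ℕ → PowerSeries 𝕜} {x : ℕ → 𝕜} (h : ∀ i, PEv u (P i) (x i))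
    (N : ℕ) : PEv u (∏ i ∈ Finset.range N, P i) (∏ i ∈ Finset.range N, x i) := by
  induction N with
  | zero => simpa using PEv.one u
  | succ N ih =>
    rw [Finset.prod_range_succ, Finset.prod_range_succ]
    exact ih.mul (h N)

lemma coeff_geom (k n : ℕ) :
    coeff n (∑' j : ℕ, (X : PowerSeries 𝕜) ^ ((k + 1) * j)) = if k + 1 ∣ n then 1 else 0 := by
  have h : HasSum (fun j : ℕ => (X : PowerSeries 𝕜) ^ ((k + 1) * j))
      (PowerSeries.mk fun n => if k + 1 ∣ n then (1 : 𝕜) else 0) := by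
    rw [hasSum_iff_hasSum_coeff]
    intro d
    simp only [coeff_X_pow, coeff_mk]
    by_cases hd : k + 1 ∣ d
    · obtain ⟨m, rfl⟩ := hd
      convert! hasSum_ite_eq m (1 : 𝕜) using 2 with j
      · simp [eq_comm]
      · simp
    · have : ∀ j, d ≠ (k + 1) * j := fun j hj => hd ⟨j, hj⟩
      simp only [this, hd, if_false]
      exact hasSum_zero
  rw [h.tsum_eq, coeff_mk]

lemma PEv.geom {u : 𝕜} (hu : ‖u‖ < 1) (k : ℕ) :
    PEv u (∑' j : ℕ, (X : PowerSeries 𝕜) ^ ((k + 1) * j)) (1 - u ^ (k + 1))⁻¹ := by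
  have hk : ‖u ^ (k + 1)‖ < 1 := by
    rw [norm_pow]; exact pow_lt_one₀ (norm_nonneg _) hu (by simp)
  have hinj : Function.Injective (fun j : ℕ => (k + 1) * j) :=
    fun a b h => Nat.eq_of_mul_eq_mul_left (Nat.succ_pos k) h
  unfold PEv
  simp_rw [coeff_geom]
  constructor
  · refine (summable_geometric_of_lt_one (norm_nonneg _) hu).of_nonneg_of_le
      (fun _ => norm_nonneg _) fun n => ?_
    split_ifs <;> simp
  · have h1 : HasSum (fun j : ℕ => u ^ ((k + 1) * j)) (1 - u ^ (k + 1))⁻¹ := by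
      simpa [pow_mul] using hasSum_geometric_of_norm_lt_one hk
    refine HasSum.tsum_eq ?_
    rw [← hinj.hasSum_iff]
    · simpa [Function.comp_def] using h1
    · intro n hn
      have : ¬ (k + 1 ∣ n) := fun ⟨m, hm⟩ => hn ⟨m, hm.symm⟩
      simp [this]

/-- number of partitions of `n` into parts at most `N` -/
def rcount (N n : ℕ) : ℕ := (Nat.Partition.restricted n (· ≤ N)).card

lemma rcount_le (N n : ℕ) : rcount N n ≤ partitionCount n := by
  rw [partitionCount, Nat.card_eq_fintype_card]
  exact Finset.card_le_univ _

lemma rcount_eq {N n : ℕ} (h : n ≤ N) : rcount N n = partitionCount n := by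
  rw [partitionCount, Nat.card_eq_fintype_card, rcount, ← Finset.card_univ]
  congr 1
  refine Finset.filter_true_of_mem fun p _ i hi => ?_
  have := Multiset.le_sum_of_mem hi
  rw [p.parts_sum] at this
  exact this.trans h

lemma rcount_ev {u : 𝕜} (hu : ‖u‖ < 1) (N : ℕ) :
    (Summable fun n => ‖(rcount N n : 𝕜) * u ^ n‖) ∧
    ∑' n, (rcount N n : 𝕜) * u ^ n = ∏ k ∈ Finset.range N, (1 - u ^ (k + 1))⁻¹ := by
  have h := PEv.prod (fun i => PEv.geom hu i) N
  have h2 : ∏ i ∈ Finset.range N, (∑' j : ℕ, (X : PowerSeries 𝕜) ^ ((i + 1) * j)) =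
      PowerSeries.mk fun n => (rcount N n : 𝕜) := by
    unfold rcount
    rw [Nat.Partition.powerSeriesMk_card_restricted_eq_tprod,
      tprod_eq_prod (s := Finset.range N)]
    · refine Finset.prod_congr rfl fun i hi => ?_
      rw [if_pos (Nat.succ_le_of_lt (Finset.mem_range.mp hi))]
    · intro i hi
      rw [if_neg (by simpa using hi)]
  rw [h2] at h
  simpa [PEv] using h

lemma multipliable_inv {u : 𝕜} (hu : ‖u‖ < 1) :
    Multipliable (fun k : ℕ => (1 - u ^ (k + 1))⁻¹) := by
  have hs : Summable fun k : ℕ => ‖-u ^ (k + 1)‖ := by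
    simpa using (summable_nat_add_iff 1).mpr (summable_geometric_of_lt_one (norm_nonneg _) hu)
  have hne : ∀ k : ℕ, 1 + -u ^ (k + 1) ≠ 0 := by
    intro k h
    have hk : ‖u ^ (k + 1)‖ < 1 := by
      rw [norm_pow]; exact pow_lt_one₀ (norm_nonneg _) hu (by simp)
    have : u ^ (k + 1) = 1 := by linear_combination -h
    simp [this] at hk
  simpa [sub_eq_add_neg] using
    (multipliable_one_add_of_summable hs).inv₀ (tprod_one_add_ne_zero_of_summable hne hs)

lemma summable_pc {r : ℝ} (h0 : 0 ≤ r) (h1 : r < 1) :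
    Summable fun n => (partitionCount n : ℝ) * r ^ n := by
  have hr : ‖r‖ < 1 := by rwa [Real.norm_of_nonneg h0]
  obtain ⟨c, hc⟩ := (multipliable_inv hr).hasProd.tendsto_prod_nat.bddAbove_range
  refine summable_of_sum_range_le (c := c) (fun n => by positivity) fun N => ?_
  have h := rcount_ev hr N
  calc ∑ n ∈ Finset.range N, (partitionCount n : ℝ) * r ^ n
      = ∑ n ∈ Finset.range N, (rcount N n : ℝ) * r ^ n :=
        Finset.sum_congr rfl fun n hn => by rw [rcount_eq (Finset.mem_range.mp hn).le]
    _ ≤ ∑' n, (rcount N n : ℝ) * r ^ n :=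
        h.1.of_norm.sum_le_tsum _ fun n _ => by positivity
    _ ≤ c := by
        rw [h.2]
        exact hc ⟨N, rfl⟩

end Helpers

/-- Euler's generating function for the partition numbers: for `|u| < 1` the infinite
product `∏_{k≥1} (1-u^k)⁻¹` converges, the series `∑_{n≥1} p(n)uⁿ` converges absolutely,
and the product equals `1` plus the sum. -/
theorem euler_partition_generating_function (u : ℂ) (hu : ‖u‖ < 1) :
    Multipliable (fun k : ℕ => (1 - u ^ (k + 1))⁻¹) ∧
    Summable (fun n : ℕ => ‖(partitionCount (n + 1) : ℂ) * u ^ (n + 1)‖) ∧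
    (∏' k : ℕ, (1 - u ^ (k + 1))⁻¹) = 1 + ∑' n : ℕ, (partitionCount (n + 1) : ℂ) * u ^ (n + 1) := by
  have hm := multipliable_inv hu
  have hs := summable_pc (norm_nonneg u) hu
  have hs' : Summable fun n => ‖(partitionCount n : ℂ) * u ^ n‖ := by simpa using hs
  refine ⟨hm, (summable_nat_add_iff 1).mpr hs', ?_⟩
  have hp0 : partitionCount 0 = 1 := by simp [partitionCount]
  have e : 1 + ∑' n : ℕ, (partitionCount (n + 1) : ℂ) * u ^ (n + 1) =
      ∑' n : ℕ, (partitionCount n : ℂ) * u ^ n := by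
    rw [hs'.of_norm.tsum_eq_zero_add]
    simp [hp0]
  rw [e]
  refine tendsto_nhds_unique hm.hasProd.tendsto_prod_nat ?_
  simp_rw [← (rcount_ev hu _).2]
  refine tendsto_tsum_of_dominated_convergence hs ?_ ?_
  · intro n
    refine tendsto_const_nhds.congr' ?_
    filter_upwards [eventually_ge_atTop n] with N hN
    rw [rcount_eq hN]
  · refine Eventually.of_forall fun N n => ?_
    rw [norm_mul, norm_pow, Complex.norm_natCast]
    gcongr
    exact_mod_cast rcount_le N n
end

section
/- (a) For every complex x with |x| < 1 and every integer k ≥ 4, f_k(x) ≤ max(f_1(x), f_2(x), f_3(x)). (b) For every x ∈ R(1) and every integer k ≥ 2, f_1(x) ≥ f_k(x). (c) For every x ∈ R(2), f_2(x) ≥ f_1(x) and f_2(x) ≥ f_k(x) for every integer k ≥ 3. (d) For every x ∈ R(3), f_3(x) ≥ f_1(x), f_3(x) ≥ f_2(x), and f_3(x) ≥ f_k(x) for every integer k ≥ 4. -/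
open Complex Filter

/-- The dilogarithm `Li₂(z) = ∑_{n=1}^∞ zⁿ/n²`. -/
noncomputable def dilog (z : ℂ) : ℂ := ∑' n : ℕ, z ^ (n + 1) / ((n : ℂ) + 1) ^ 2

/-- `fk k x = (1/k)·Re √(Li₂(x^k))` with the principal branch square root. -/
noncomputable def fk (k : ℕ) (x : ℂ) : ℝ := (1 / (k : ℝ)) * ((dilog (x ^ k)) ^ (1 / 2 : ℂ)).re

/-- The region `R(1)`. -/
def R1 : Set ℂ := {x | ‖x‖ < 1 ∧ fk 2 x ≤ fk 1 x ∧ fk 3 x ≤ fk 1 x}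

/-- The region `R(2)`. -/
def R2 : Set ℂ := {x | ‖x‖ < 1 ∧ fk 1 x ≤ fk 2 x ∧ fk 3 x ≤ fk 2 x}

/-- The region `R(3)`. -/
def R3 : Set ℂ := {x | ‖x‖ < 1 ∧ fk 1 x ≤ fk 3 x ∧ fk 2 x ≤ fk 3 x}

open MeasureTheory in
/-- Lebesgue measure on the unit square. -/
noncomputable def sqMeasure : Measure (ℝ × ℝ) :=
  (volume.restrict (Set.Icc (0:ℝ) 1)).prod (volume.restrict (Set.Icc (0:ℝ) 1))

instance : MeasureTheory.IsProbabilityMeasure (MeasureTheory.volume.restrict (Set.Icc (0:ℝ) 1)) :=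
  ⟨by simp⟩

instance : MeasureTheory.IsProbabilityMeasure sqMeasure := by
  unfold sqMeasure; infer_instance

theorem sqMeasure_ae : ∀ᵐ p ∂sqMeasure, 0 ≤ p.1 * p.2 ∧ p.1 * p.2 ≤ 1 := by
  have h : sqMeasure = MeasureTheory.volume.restrict (Set.Icc (0:ℝ) 1 ×ˢ Set.Icc (0:ℝ) 1) := by
    unfold sqMeasure
    rw [MeasureTheory.Measure.prod_restrict]; rfl
  rw [h]
  filter_upwards [MeasureTheory.ae_restrict_mem (measurableSet_Icc.prod measurableSet_Icc)] with p hp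
  obtain ⟨⟨h1, h2⟩, h3, h4⟩ := hp
  exact ⟨mul_nonneg h1 h3, mul_le_one₀ h2 h3 h4⟩

theorem integral_pow_sq (n : ℕ) : ∫ p, (p.1 * p.2) ^ n ∂sqMeasure = 1 / ((n:ℝ) + 1) ^ 2 := by
  have h1 : ∫ t in Set.Icc (0:ℝ) 1, t ^ n = 1 / ((n:ℝ) + 1) := by
    rw [MeasureTheory.integral_Icc_eq_integral_Ioc, ← intervalIntegral.integral_of_le zero_le_one,
      integral_pow]
    simp
  unfold sqMeasure
  simp_rw [mul_pow]
  rw [MeasureTheory.integral_prod_mul (fun t : ℝ => t ^ n) (fun t : ℝ => t ^ n), h1]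
  field_simp

theorem integrable_of_bdd {E : Type*} [NormedAddCommGroup E] {f : ℝ × ℝ → E} (C : ℝ)
    (hf : MeasureTheory.AEStronglyMeasurable f sqMeasure)
    (h : ∀ p : ℝ × ℝ, 0 ≤ p.1 * p.2 → p.1 * p.2 ≤ 1 → ‖f p‖ ≤ C) :
    MeasureTheory.Integrable f sqMeasure := by
  refine MeasureTheory.Integrable.of_bound hf C ?_
  filter_upwards [sqMeasure_ae] with p hp
  exact h p hp.1 hp.2

theorem integrable_pow_sq (n : ℕ) :
    MeasureTheory.Integrable (fun p : ℝ × ℝ => (p.1 * p.2) ^ n) sqMeasure := by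
  refine integrable_of_bdd 1 (by fun_prop) ?_
  intro p h0 h1
  rw [norm_pow, Real.norm_of_nonneg h0]
  exact pow_le_one₀ h0 h1

theorem norm_ut {y : ℂ} {t : ℝ} (h0 : 0 ≤ t) (h1 : t ≤ 1) : ‖y * (t:ℂ)‖ ≤ ‖y‖ := by
  rw [norm_mul, Complex.norm_real, Real.norm_of_nonneg h0]
  exact mul_le_of_le_one_right (norm_nonneg _) h1

theorem dilog_term_integral (y : ℂ) (n : ℕ) :
    ∫ p, y ^ (n + 1) * (((p.1 * p.2 : ℝ) : ℂ)) ^ n ∂sqMeasure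
      = y ^ (n + 1) / ((n : ℂ) + 1) ^ 2 := by
  rw [MeasureTheory.integral_const_mul]
  have : ∀ p : ℝ × ℝ, (((p.1 * p.2 : ℝ) : ℂ)) ^ n = (((p.1 * p.2) ^ n : ℝ) : ℂ) := by
    intro p; push_cast; ring
  simp_rw [this]
  rw [integral_complex_ofReal, integral_pow_sq]
  push_cast
  ring

theorem dilog_eq_integral {y : ℂ} (hy : ‖y‖ < 1) :
    dilog y = ∫ p, y / (1 - y * ((p.1 * p.2 : ℝ) : ℂ)) ∂sqMeasure := by
  have hb : ∀ (n : ℕ) (p : ℝ × ℝ), 0 ≤ p.1 * p.2 → p.1 * p.2 ≤ 1 →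
      ‖y ^ (n + 1) * (((p.1 * p.2 : ℝ) : ℂ)) ^ n‖ ≤ ‖y‖ ^ (n + 1) := by
    intro n p h0 h1
    rw [norm_mul, norm_pow, norm_pow, Complex.norm_real, Real.norm_of_nonneg h0]
    exact mul_le_of_le_one_right (by positivity) (pow_le_one₀ h0 h1)
  have hint : ∀ n : ℕ, MeasureTheory.Integrable
      (fun p : ℝ × ℝ => y ^ (n + 1) * (((p.1 * p.2 : ℝ) : ℂ)) ^ n) sqMeasure := by
    intro n
    exact integrable_of_bdd (‖y‖ ^ (n + 1)) (by fun_prop) (hb n)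
  have hs : Summable fun n : ℕ => ‖y‖ ^ (n + 1) :=
    (summable_nat_add_iff 1).2 (summable_geometric_of_lt_one (norm_nonneg _) hy)
  have hsum : Summable fun n : ℕ =>
      ∫ p, ‖y ^ (n + 1) * (((p.1 * p.2 : ℝ) : ℂ)) ^ n‖ ∂sqMeasure := by
    refine Summable.of_nonneg_of_le (fun n => MeasureTheory.integral_nonneg fun p => norm_nonneg _)
      (fun n => ?_) hs
    calc ∫ p, ‖y ^ (n + 1) * (((p.1 * p.2 : ℝ) : ℂ)) ^ n‖ ∂sqMeasure
        ≤ ∫ _p, ‖y‖ ^ (n + 1) ∂sqMeasure := by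
          refine MeasureTheory.integral_mono_ae (hint n).norm (MeasureTheory.integrable_const _) ?_
          filter_upwards [sqMeasure_ae] with p hp
          exact hb n p hp.1 hp.2
      _ = ‖y‖ ^ (n + 1) := by simp
  have key := MeasureTheory.hasSum_integral_of_summable_integral_norm hint hsum
  simp_rw [dilog_term_integral] at key
  unfold dilog
  rw [key.tsum_eq]
  refine MeasureTheory.integral_congr_ae ?_
  filter_upwards [sqMeasure_ae] with p hp
  have hlt := (norm_ut (y := y) hp.1 hp.2).trans_lt hy
  have hg := (hasSum_geometric_of_norm_lt_one hlt).mul_left y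
  rw [div_eq_mul_inv, ← hg.tsum_eq]
  congr 1
  ext n
  rw [mul_pow]; ring

theorem one_sub_ne {y : ℂ} {t : ℝ} (h0 : 0 ≤ t) (h1 : t ≤ 1) :
    1 - ‖y‖ ≤ ‖1 - y * (t:ℂ)‖ := by
  have h := norm_sub_norm_le (1:ℂ) (y * (t:ℂ))
  rw [norm_one] at h
  have := norm_ut (y := y) h0 h1
  linarith

theorem integrable_kernel {y : ℂ} (hy : ‖y‖ < 1) :
    MeasureTheory.Integrable (fun p : ℝ × ℝ => y / (1 - y * ((p.1 * p.2 : ℝ) : ℂ))) sqMeasure := by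
  refine integrable_of_bdd (‖y‖ / (1 - ‖y‖)) ?_ ?_
  · exact Measurable.aestronglyMeasurable (by fun_prop)
  · intro p h0 h1
    rw [norm_div]
    exact div_le_div_of_nonneg_left (norm_nonneg _) (by linarith) (one_sub_ne h0 h1)

/-- crude bound on the dilogarithm -/
theorem norm_dilog_le_two {y : ℂ} (hy : ‖y‖ < 1) : ‖dilog y‖ ≤ 2 * ‖y‖ := by
  have hz : HasSum (fun n : ℕ => 1 / ((n:ℝ) + 1) ^ 2) (Real.pi ^ 2 / 6) := by
    have h := (hasSum_nat_add_iff' 1).2 hasSum_zeta_two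
    simpa using h
  have hz2 := hz.mul_left ‖y‖
  have h := tsum_of_norm_bounded (f := fun n : ℕ => y ^ (n + 1) / ((n : ℂ) + 1) ^ 2) hz2 (by
    intro n
    have h1 : ‖((n : ℂ) + 1)‖ = (n:ℝ) + 1 := by
      have : ((n : ℂ) + 1) = (((n:ℝ) + 1 : ℝ) : ℂ) := by push_cast; rfl
      rw [this, Complex.norm_real, Real.norm_of_nonneg (by positivity)]
    rw [norm_div, norm_pow, norm_pow, h1, mul_one_div]
    gcongr
    rw [pow_succ]
    exact mul_le_of_le_one_left (norm_nonneg _) (pow_le_one₀ (norm_nonneg _) hy.le))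
  have hpi : Real.pi ^ 2 / 6 ≤ 2 := by
    have := Real.pi_lt_d2
    have := Real.pi_pos
    nlinarith
  unfold dilog
  nlinarith [norm_nonneg y]

/-- the dilogarithm on the left half disk -/
theorem norm_dilog_le_left {y : ℂ} (hy : ‖y‖ < 1) (hre : y.re ≤ 0) : ‖dilog y‖ ≤ ‖y‖ := by
  rw [dilog_eq_integral hy]
  have h := MeasureTheory.norm_integral_le_of_norm_le_const (μ := sqMeasure) (C := ‖y‖)
    (f := fun p : ℝ × ℝ => y / (1 - y * ((p.1 * p.2 : ℝ) : ℂ))) (by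
    filter_upwards [sqMeasure_ae] with p hp
    rw [norm_div]
    refine div_le_self (norm_nonneg _) ?_
    have h2 := Complex.re_le_norm (1 - y * ((p.1 * p.2 : ℝ) : ℂ))
    have h3 : (1 - y * ((p.1 * p.2 : ℝ) : ℂ)).re = 1 - y.re * (p.1 * p.2) := by
      rw [Complex.sub_re, Complex.one_re, Complex.re_mul_ofReal]
    rw [h3] at h2
    nlinarith [mul_nonneg (neg_nonneg.2 hre) hp.1])
  simpa using h

theorem kernel_re (z : ℂ) (hz : ‖z‖ = 1) (r t : ℝ) (hr : r < 1) (hr0 : 0 ≤ r)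
    (h0 : 0 ≤ t) (h1 : t ≤ 1) :
    0 < 1 - 2 * z.re * (r * t) + (r * t) ^ 2 ∧
    ((1 + (starRingEnd ℂ) z) * ((r * z) / (1 - (r * z) * (t : ℂ)))).re
      = r * ((1 + z.re) * (1 - r * t) / (1 - 2 * z.re * (r * t) + (r * t) ^ 2)) := by
  have hq : z.re ^ 2 + z.im ^ 2 = 1 := by
    have := Complex.sq_norm z
    rw [hz, Complex.normSq_apply] at this
    nlinarith
  have hc : z.re ≤ 1 := by nlinarith [sq_nonneg z.im]
  have hu : r * t < 1 := by nlinarith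
  have hu0 : 0 ≤ r * t := mul_nonneg hr0 h0
  have hpos : 0 < 1 - 2 * z.re * (r * t) + (r * t) ^ 2 := by
    nlinarith [mul_nonneg hu0 (sub_nonneg.2 hc), mul_pos (sub_pos.2 hu) (sub_pos.2 hu)]
  refine ⟨hpos, ?_⟩
  have hn : Complex.normSq (1 - (r * z) * (t : ℂ)) = 1 - 2 * z.re * (r * t) + (r * t) ^ 2 := by
    rw [Complex.normSq_apply]
    simp
    linear_combination (r * t) ^ 2 * hq
  rw [← mul_div_assoc, Complex.div_re, hn, ← add_div, ← mul_div_assoc]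
  congr 1
  simp
  linear_combination (- r ^ 2 * t * z.re - r ^ 2 * t + r) * hq

theorem lower_integral (z : ℂ) (hz : ‖z‖ = 1) (r : ℝ) (hr0 : 0 ≤ r) (hr : r < 1)
    (K a b d : ℝ)
    (h : ∀ u : ℝ, 0 ≤ u → u ≤ 1 → K * (1 + a * u + b * u ^ 2 + d * u ^ 3) *
      (1 - 2 * z.re * u + u ^ 2) ≤ (1 + z.re) * (1 - u)) :
    r * (K * (1 + a * r / 4 + b * r ^ 2 / 9 + d * r ^ 3 / 16)) ≤
      ((1 + (starRingEnd ℂ) z) * dilog (r * z)).re := by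
  have hy : ‖(r:ℂ) * z‖ < 1 := by
    rw [norm_mul, hz, Complex.norm_real, Real.norm_of_nonneg hr0]; linarith
  have hI := (integrable_kernel hy).const_mul (1 + (starRingEnd ℂ) z)
  rw [dilog_eq_integral hy, ← MeasureTheory.integral_const_mul]
  have hre := integral_re hI
  simp only [RCLike.re_to_complex] at hre
  rw [← hre]
  have hq : ∫ p, (r * K * (p.1 * p.2) ^ 0 + r * K * a * r * (p.1 * p.2) ^ 1
      + r * K * b * r ^ 2 * (p.1 * p.2) ^ 2 + r * K * d * r ^ 3 * (p.1 * p.2) ^ 3) ∂sqMeasure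
      = r * (K * (1 + a * r / 4 + b * r ^ 2 / 9 + d * r ^ 3 / 16)) := by
    have i0 := (integrable_pow_sq 0).const_mul (r * K)
    have i1 := (integrable_pow_sq 1).const_mul (r * K * a * r)
    have i2 := (integrable_pow_sq 2).const_mul (r * K * b * r ^ 2)
    have i3 := (integrable_pow_sq 3).const_mul (r * K * d * r ^ 3)
    have i01 : MeasureTheory.Integrable (fun p : ℝ × ℝ => r * K * (p.1 * p.2) ^ 0
      + r * K * a * r * (p.1 * p.2) ^ 1) sqMeasure := i0.add i1
    have i012 : MeasureTheory.Integrable (fun p : ℝ × ℝ => r * K * (p.1 * p.2) ^ 0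
      + r * K * a * r * (p.1 * p.2) ^ 1 + r * K * b * r ^ 2 * (p.1 * p.2) ^ 2) sqMeasure :=
      i01.add i2
    rw [MeasureTheory.integral_add i012 i3,
      MeasureTheory.integral_add i01 i2, MeasureTheory.integral_add i0 i1]
    simp only [MeasureTheory.integral_const_mul, integral_pow_sq]
    norm_num
    ring
  rw [← hq]
  refine MeasureTheory.integral_mono_ae ?_ hI.re ?_
  · exact ((((integrable_pow_sq 0).const_mul (r * K)).add
      ((integrable_pow_sq 1).const_mul (r * K * a * r))).add
      ((integrable_pow_sq 2).const_mul (r * K * b * r ^ 2))).add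
      ((integrable_pow_sq 3).const_mul (r * K * d * r ^ 3))
  · filter_upwards [sqMeasure_ae] with p hp
    obtain ⟨hpos, he⟩ := kernel_re z hz r (p.1 * p.2) hr hr0 hp.1 hp.2
    have hu0 : 0 ≤ r * (p.1 * p.2) := mul_nonneg hr0 hp.1
    have hu1 : r * (p.1 * p.2) ≤ 1 := mul_le_one₀ hr.le hp.1 hp.2
    have h2 := (le_div_iff₀ hpos).2 (h _ hu0 hu1)
    refine le_trans ?_ (le_of_eq he.symm)
    refine le_trans (le_of_eq ?_) (mul_le_mul_of_nonneg_left h2 hr0)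
    ring

theorem sqrt_re_nonneg (w : ℂ) : 0 ≤ (w ^ (1 / 2 : ℂ)).re := by
  by_cases hw : w = 0
  · subst hw; simp
  · rw [Complex.cpow_def_of_ne_zero hw, Complex.exp_re]
    refine mul_nonneg (Real.exp_pos _).le (Real.cos_nonneg_of_neg_pi_div_two_le_of_le ?_ ?_)
    · have : (Complex.log w * (1 / 2)).im = w.arg / 2 := by
        rw [show (1 / 2 : ℂ) = ((1 / 2 : ℝ) : ℂ) by push_cast; rfl, Complex.im_mul_ofReal,
          Complex.log_im]; ring
      rw [this]; linarith [Complex.neg_pi_lt_arg w]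
    · have : (Complex.log w * (1 / 2)).im = w.arg / 2 := by
        rw [show (1 / 2 : ℂ) = ((1 / 2 : ℝ) : ℂ) by push_cast; rfl, Complex.im_mul_ofReal,
          Complex.log_im]; ring
      rw [this]; linarith [Complex.arg_le_pi w]

theorem sqrt_re_sq (w : ℂ) : (w ^ (1 / 2 : ℂ)).re ^ 2 = (‖w‖ + w.re) / 2 := by
  have h : (w ^ (1 / 2 : ℂ)) ^ 2 = w := by
    have := Complex.cpow_nat_inv_pow w (n := 2) (by norm_num)
    simpa using this
  generalize w ^ (1 / 2 : ℂ) = s at h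
  have hn : ‖w‖ = s.re ^ 2 + s.im ^ 2 := by
    rw [← h, norm_pow, Complex.sq_norm, Complex.normSq_apply]; ring
  have hr : w.re = s.re ^ 2 - s.im ^ 2 := by
    rw [← h, pow_two, Complex.mul_re]; ring
  rw [hn, hr]; ring

theorem sqrt_re_sq_lower (w z : ℂ) (hz : ‖z‖ = 1) :
    ((1 + (starRingEnd ℂ) z) * w).re / 2 ≤ (w ^ (1 / 2 : ℂ)).re ^ 2 := by
  rw [sqrt_re_sq]
  have h := Complex.re_le_norm ((starRingEnd ℂ) z * w)
  rw [norm_mul, Complex.norm_conj, hz, one_mul] at h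
  rw [add_mul, one_mul, Complex.add_re]
  linarith

theorem lowerA (z : ℂ) (hz : ‖z‖ = 1) (r : ℝ) (hr0 : 0 ≤ r) (hr : r < 1)
    (hc : -0.70715 ≤ z.re) :
    (1 + z.re) / 2 * 0.58 * r ≤ ((dilog (r * z)) ^ (1 / 2 : ℂ)).re ^ 2 := by
  refine le_trans ?_ (sqrt_re_sq_lower _ z hz)
  have h := lower_integral z hz r hr0 hr (1 + z.re) (-2.4143) (2.1143) (-0.7) (by
    intro u h0 h1
    have hq : (1 + -2.4143 * u + 2.1143 * u ^ 2 + -0.7 * u ^ 3)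
      = (1 - u) * (1 - 1.4143 * u + 0.7 * u ^ 2) := by ring
    rw [hq, mul_assoc, mul_assoc]
    refine mul_le_mul_of_nonneg_left ?_ (by linarith)
    refine mul_le_of_le_one_right (by linarith) ?_
    have hp : 0 ≤ 1 - 1.4143 * u + 0.7 * u ^ 2 := by nlinarith [sq_nonneg (u - 1.01)]
    have h3 : 1 - 2 * z.re * u + u ^ 2 ≤ 1 + 1.4143 * u + u ^ 2 := by nlinarith
    refine (mul_le_mul_of_nonneg_left h3 hp).trans ?_
    nlinarith [mul_nonneg h0 h0, mul_nonneg (mul_nonneg h0 h0) h0,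
      mul_nonneg (mul_nonneg h0 h0) (sub_nonneg.2 h1), mul_nonneg (mul_nonneg (mul_nonneg h0 h0) h0) (sub_nonneg.2 h1)])
  have h2 : 0.58 ≤ 1 + -2.4143 * r / 4 + 2.1143 * r ^ 2 / 9 + -0.7 * r ^ 3 / 16 := by
    nlinarith [mul_nonneg hr0 (sub_nonneg.2 hr.le), mul_nonneg (mul_nonneg hr0 hr0) (sub_nonneg.2 hr.le)]
  have h3 : r * ((1 + z.re) * 0.58) ≤ r * ((1 + z.re) *
      (1 + -2.4143 * r / 4 + 2.1143 * r ^ 2 / 9 + -0.7 * r ^ 3 / 16)) :=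
    mul_le_mul_of_nonneg_left (mul_le_mul_of_nonneg_left h2 (by linarith)) hr0
  linarith

theorem lowerB (z : ℂ) (hz : ‖z‖ = 1) (r : ℝ) (hr0 : 0 ≤ r) (hr : r < 1)
    (hc : 0 ≤ z.re) :
    0.33 * r ≤ ((dilog (r * z)) ^ (1 / 2 : ℂ)).re ^ 2 := by
  refine le_trans ?_ (sqrt_re_sq_lower _ z hz)
  have h := lower_integral z hz r hr0 hr 1 (-1) (-1) 1 (by
    intro u h0 h1
    have hq : 1 * (1 + -1 * u + -1 * u ^ 2 + 1 * u ^ 3)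
      = (1 - u) * (1 - u ^ 2) := by ring
    rw [hq, mul_assoc, mul_comm (1 + z.re)]
    refine mul_le_mul_of_nonneg_left ?_ (by linarith)
    have hp : 0 ≤ 1 - u ^ 2 := by nlinarith
    nlinarith [mul_nonneg (mul_nonneg hc h0) hp, sq_nonneg (u ^ 2)])
  have h2 : 0.68 ≤ 1 * (1 + -1 * r / 4 + -1 * r ^ 2 / 9 + 1 * r ^ 3 / 16) := by
    nlinarith [mul_nonneg hr0 (sub_nonneg.2 hr.le), mul_nonneg (mul_nonneg hr0 hr0) (sub_nonneg.2 hr.le)]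
  have h3 := mul_le_mul_of_nonneg_left h2 hr0
  linarith

theorem lowerC (z : ℂ) (hz : ‖z‖ = 1) (r : ℝ) (hr0 : 0 ≤ r) (hr : r < 1)
    (hc : 1 / 2 ≤ z.re) :
    0.56 * r ≤ ((dilog (r * z)) ^ (1 / 2 : ℂ)).re ^ 2 := by
  refine le_trans ?_ (sqrt_re_sq_lower _ z hz)
  have h := lower_integral z hz r hr0 hr 1.5 (-1) 0 0 (by
    intro u h0 h1
    have hq : 1.5 * (1 + -1 * u + 0 * u ^ 2 + 0 * u ^ 3)
      = (1 - u) * 1.5 := by ring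
    rw [hq, mul_assoc, mul_comm (1 + z.re)]
    refine mul_le_mul_of_nonneg_left ?_ (by linarith)
    nlinarith [mul_nonneg (sub_nonneg.2 hc) h0, mul_nonneg h0 (sub_nonneg.2 h1)])
  have h2 : 1.12 ≤ 1.5 * (1 + -1 * r / 4 + 0 * r ^ 2 / 9 + 0 * r ^ 3 / 16) := by
    linarith
  have h3 := mul_le_mul_of_nonneg_left h2 hr0
  linarith

theorem fk_nonneg (k : ℕ) (x : ℂ) : 0 ≤ fk k x :=
  mul_nonneg (by positivity) (sqrt_re_nonneg _)

theorem fk_le_of_sq {j k : ℕ} {x : ℂ} (h : fk k x ^ 2 ≤ fk j x ^ 2) : fk k x ≤ fk j x :=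
  (pow_le_pow_iff_left₀ (fk_nonneg _ _) (fk_nonneg _ _) two_ne_zero).1 h

theorem fk_sq (k : ℕ) (x : ℂ) :
    fk k x ^ 2 = (1 / (k:ℝ) ^ 2) * ((dilog (x ^ k)) ^ (1 / 2 : ℂ)).re ^ 2 := by
  unfold fk; rw [mul_pow, div_pow, one_pow]

theorem fk_sq_le (k : ℕ) (x : ℂ) : fk k x ^ 2 ≤ (1 / (k:ℝ) ^ 2) * ‖dilog (x ^ k)‖ := by
  rw [fk_sq, sqrt_re_sq]
  refine mul_le_mul_of_nonneg_left ?_ (by positivity)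
  linarith [Complex.re_le_norm (dilog (x ^ k))]

theorem fk_le_max_two {x : ℂ} (hx : ‖x‖ < 1) {k : ℕ} (hk : 4 ≤ k) :
    fk k x ≤ fk 1 x ∨ fk k x ≤ fk 2 x := by
  obtain ⟨z, hz, hxz⟩ : ∃ z : ℂ, ‖z‖ = 1 ∧ x = (‖x‖ : ℂ) * z := by
    by_cases h0 : x = 0
    · exact ⟨1, by simp, by simp [h0]⟩
    · have hn : (‖x‖ : ℂ) ≠ 0 := by simpa using h0
      refine ⟨x / (‖x‖ : ℂ), ?_, by field_simp⟩
      rw [norm_div, Complex.norm_real, norm_norm, div_self (by simpa using h0)]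
  set r : ℝ := ‖x‖ with hr
  have hr0 : 0 ≤ r := norm_nonneg x
  have hq : z.re ^ 2 + z.im ^ 2 = 1 := by
    have := Complex.sq_norm z
    rw [hz, Complex.normSq_apply] at this
    nlinarith
  have hz2 : ‖z ^ 2‖ = 1 := by rw [norm_pow, hz, one_pow]
  have hz2re : (z ^ 2).re = 2 * z.re ^ 2 - 1 := by
    rw [pow_two, Complex.mul_re]; linarith
  have hr2 : r ^ 2 < 1 := by nlinarith
  have hr20 : 0 ≤ r ^ 2 := sq_nonneg r
  have e1 : fk 1 x ^ 2 = ((dilog (r * z)) ^ (1 / 2 : ℂ)).re ^ 2 := by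
    rw [fk_sq, pow_one, ← hxz]; simp
  have e2 : fk 2 x ^ 2 = 1 / 4 * ((dilog ((r ^ 2 : ℝ) * z ^ 2)) ^ (1 / 2 : ℂ)).re ^ 2 := by
    rw [fk_sq]
    have : x ^ 2 = ((r ^ 2 : ℝ) : ℂ) * z ^ 2 := by
      conv_lhs => rw [hxz]
      push_cast; ring
    rw [this]; norm_num
  have hxk : ‖x ^ k‖ = r ^ k := by rw [norm_pow]
  have hxk1 : ‖x ^ k‖ < 1 := by rw [hxk]; exact pow_lt_one₀ hr0 hx (by omega)
  have hrk2 : r ^ k ≤ r ^ 2 := pow_le_pow_of_le_one hr0 hx.le (by omega)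
  have hr12 : r ^ 2 ≤ r := by nlinarith
  -- generic comparison with the constant 0.08
  have main : fk k x ^ 2 ≤ 0.08 * r ^ 2 → fk k x ≤ fk 1 x ∨ fk k x ≤ fk 2 x := by
    intro hb
    by_cases hc : -0.70715 ≤ z.re
    · left
      apply fk_le_of_sq
      have := lowerA z hz r hr0 hx hc
      rw [e1]
      nlinarith
    · right
      apply fk_le_of_sq
      have := lowerB (z ^ 2) hz2 (r ^ 2) hr20 hr2 (by rw [hz2re]; nlinarith)
      rw [e2]
      nlinarith
  have hup := fk_sq_le k x
  have hcr := norm_dilog_le_two hxk1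
  rw [hxk] at hcr
  rcases Nat.lt_or_ge 4 k with h5 | h4
  · apply main
    have hk5 : (5:ℝ) ≤ k := by exact_mod_cast h5
    have hk25 : 1 / (k:ℝ) ^ 2 ≤ 1 / 25 := by
      apply one_div_le_one_div_of_le (by norm_num); nlinarith
    have := mul_le_mul hk25 hcr (norm_nonneg _) (by norm_num)
    linarith
  · have hk4 : k = 4 := by omega
    subst hk4
    have hup' : fk 4 x ^ 2 ≤ 1 / 16 * ‖dilog (x ^ 4)‖ := by
      refine hup.trans (le_of_eq ?_); norm_num
    by_cases hc1 : -0.4 ≤ z.re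
    · left
      apply fk_le_of_sq
      have := lowerA z hz r hr0 hx (by linarith)
      rw [e1]
      nlinarith [mul_nonneg hr0 (by linarith : (0:ℝ) ≤ z.re + 0.4)]
    · by_cases hc2 : -0.9 ≤ z.re
      · apply main
        have hre : (x ^ 4).re ≤ 0 := by
          have h4e : x ^ 4 = ((r ^ 4 : ℝ) : ℂ) * (z ^ 2 * z ^ 2) := by
            conv_lhs => rw [hxz]
            push_cast; ring
          have him : (z ^ 2).im ^ 2 = 1 - (z ^ 2).re ^ 2 := by
            have := Complex.sq_norm (z ^ 2)
            rw [hz2, Complex.normSq_apply] at this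
            linarith
          rw [h4e, Complex.re_ofReal_mul, Complex.mul_re]
          refine mul_nonpos_of_nonneg_of_nonpos (by positivity) ?_
          have hA : -0.7 ≤ (z ^ 2).re := by rw [hz2re]; nlinarith
          have hB : (z ^ 2).re ≤ 0.7 := by rw [hz2re]; nlinarith
          nlinarith
        have := norm_dilog_le_left hxk1 hre
        rw [hxk] at this
        linarith
      · right
        apply fk_le_of_sq
        have := lowerC (z ^ 2) hz2 (r ^ 2) hr20 hr2 (by rw [hz2re]; nlinarith)
        rw [e2]
        linarith

/-- Domination theorem: (a) on the unit disk `fk k ≤ max(f₁,f₂,f₃)` for `k ≥ 4`;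
(b) `f₁` dominates all `fk`, `k ≥ 2`, on `R(1)`; (c) `f₂` dominates `f₁` and all `fk`, `k ≥ 3`,
on `R(2)`; (d) `f₃` dominates `f₁`, `f₂` and all `fk`, `k ≥ 4`, on `R(3)`. -/
theorem fk_domination :
    (∀ x : ℂ, ‖x‖ < 1 → ∀ k : ℕ, 4 ≤ k → fk k x ≤ max (fk 1 x) (max (fk 2 x) (fk 3 x))) ∧
    (∀ x ∈ R1, ∀ k : ℕ, 2 ≤ k → fk 1 x ≥ fk k x) ∧
    (∀ x ∈ R2, fk 2 x ≥ fk 1 x ∧ ∀ k : ℕ, 3 ≤ k → fk 2 x ≥ fk k x) ∧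
    (∀ x ∈ R3, fk 3 x ≥ fk 1 x ∧ fk 3 x ≥ fk 2 x ∧ ∀ k : ℕ, 4 ≤ k → fk 3 x ≥ fk k x) := by
  have ha : ∀ x : ℂ, ‖x‖ < 1 → ∀ k : ℕ, 4 ≤ k →
      fk k x ≤ max (fk 1 x) (max (fk 2 x) (fk 3 x)) := by
    intro x hx k hk
    rcases fk_le_max_two hx hk with h | h
    · exact h.trans (le_max_left _ _)
    · exact h.trans ((le_max_left _ _).trans (le_max_right _ _))
  refine ⟨ha, ?_, ?_, ?_⟩
  · rintro x ⟨hx, h2, h3⟩ k hk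
    rcases Nat.lt_or_ge k 4 with h | h
    · interval_cases k
      · exact h2
      · exact h3
    · exact (ha x hx k h).trans (max_le le_rfl (max_le h2 h3))
  · rintro x ⟨hx, h1, h3⟩
    refine ⟨h1, fun k hk => ?_⟩
    rcases Nat.lt_or_ge k 4 with h | h
    · interval_cases k
      exact h3
    · exact (ha x hx k h).trans (max_le h1 (max_le le_rfl h3))
  · rintro x ⟨hx, h1, h2⟩
    exact ⟨h1, h2, fun k hk => (ha x hx k hk).trans (max_le h1 (max_le h2 le_rfl))⟩
end
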